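/- arXiv:1910.10692 — 2 statements merged into one kernel-verified Lean document; each statement's English description precedes it below -/
import Mathlib

section
/- Let t ≥ 2, let T be an order-t tensor with all sides of size n, and let H be the walk hypergraph of a connected d-regular graph G on n vertices whose adjacency-matrix second-largest eigenvalue in absolute value is λ ∈ (0,d). Suppose T̂ is any order-t tensor satisfying T̂_e = T_e for every hyperedge e ∈ E(H) and ‖T̂‖_max ≤ ‖T‖_max. Then (1/n^t)·‖T̂ − T‖_F² ≤ 2^t·(2t−3)·1.783^{t−1}·‖T‖_max²·(λ/d), where 1.783 is an upper bound on Grothendieck's constant over ℝ. -/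
open Classical

/-- `‖U‖_{2,∞}`: the maximum ℓ2-norm of a row of `U`. -/
noncomputable def rowTwoInf {α : Type*} {r : ℕ} (U : α → Fin r → ℝ) : ℝ :=
  ⨆ a : α, Real.sqrt (∑ l, (U a l) ^ 2)

/-- The max-quasinorm of an order-`t` tensor: the infimum over all rank-`r`
factorizations `T = U⁽¹⁾ ∘ ⋯ ∘ U⁽ᵗ⁾` (over all `r`) of `∏ i, ‖U⁽ⁱ⁾‖_{2,∞}`. -/
noncomputable def maxQnorm {t : ℕ} {n : Fin t → ℕ}
    (T : ((i : Fin t) → Fin (n i)) → ℝ) : ℝ :=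
  sInf { c : ℝ | ∃ (r : ℕ) (U : (i : Fin t) → Fin (n i) → Fin r → ℝ),
    (∀ x, T x = ∑ l : Fin r, ∏ i, U i (x i) l) ∧ c = ∏ i, rowTwoInf (U i) }

/-- Hyperedges of the walk hypergraph of a graph `G`: a tuple
`(v 0, …, v (t-1))` is a hyperedge iff it is a walk of length `t-1` in `G`. -/
def walkEdge {t n : ℕ} (G : SimpleGraph (Fin n)) (v : Fin t → Fin n) : Prop :=
  ∀ i : Fin (t - 1),
    G.Adj (v ⟨(i : ℕ), by have := i.isLt; omega⟩)
      (v ⟨(i : ℕ) + 1, by have := i.isLt; omega⟩)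

/-!
Scale `T` and `That` so that both lie in the unit ball of the max-quasinorm. The factorizations
with unit rows are closed under entrywise products and, up to a factor `√2 ^ t`, under sums, so
`(That - T) ^ 2 / 2 ^ t` lies in the unit ball as well. For a rank-one tensor, replacing one step of
the stationary random walk by an independent uniform vertex costs at most `lam / d` times the
product of the `ℓ²`-norms of the two functions it connects (expander mixing); summing over the
rank-one terms with Cauchy-Schwarz, a tensor in the unit ball has nearly the same average over
walks of length `t - 1`, up to `(t - 1) * (lam / d)`, as over all tuples. Bernoulli's inequality
compares the resulting constant `t - 1` with `(2 * t - 3) * 1.783 ^ (t - 1)`, so Grothendieck's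
inequality is not needed.
-/

open Finset Matrix
open scoped BigOperators

section Mixing

variable {V : Type*} [Fintype V]

/-- The matrix `A` shrinks the `ℓ²`-norm of mean-zero vectors by the factor `μ`. For the adjacency
matrix of a regular graph, this says that all eigenvalues on the orthogonal complement of the
all-ones vector are at most `|μ|` in absolute value. -/
def ContractsMeanZero (A : Matrix V V ℝ) (μ : ℝ) : Prop :=
  ∀ u : V → ℝ, ∑ i, u i = 0 → ∑ j, (A *ᵥ u) j ^ 2 ≤ μ ^ 2 * ∑ i, u i ^ 2

lemma ContractsMeanZero.smul {A : Matrix V V ℝ} {μ : ℝ} (hA : ContractsMeanZero A μ) (c : ℝ) :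
    ContractsMeanZero (c • A) (c * μ) := by
  intro u hu
  simp only [smul_mulVec, Pi.smul_apply, smul_eq_mul, mul_pow, ← mul_sum, mul_assoc]
  exact mul_le_mul_of_nonneg_left (hA u hu) (sq_nonneg c)

lemma ContractsMeanZero.expect_sq_mulVec_le {A : Matrix V V ℝ} {μ : ℝ}
    (hA : ContractsMeanZero A μ) {u : V → ℝ} (hu : 𝔼 y, u y = 0) :
    𝔼 y, (A *ᵥ u) y ^ 2 ≤ μ ^ 2 * 𝔼 y, u y ^ 2 := by
  have hsum : ∑ y, u y = 0 := by rw [← Fintype.card_mul_expect, hu, mul_zero]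
  simp only [Fintype.expect_eq_sum_div_card, ← mul_div_assoc]
  gcongr
  exact hA u hsum

lemma expect_sq_sub_expect_le [Nonempty V] (f : V → ℝ) :
    𝔼 y, (f y - 𝔼 z, f z) ^ 2 ≤ 𝔼 y, f y ^ 2 := by
  have hexpand : 𝔼 y, (f y - 𝔼 z, f z) ^ 2 = 𝔼 y, f y ^ 2 - (𝔼 z, f z) ^ 2 := by
    simp only [sub_sq, expect_add_distrib, expect_sub_distrib, ← expect_mul, ← mul_expect,
      Fintype.expect_const]
    ring
  rw [hexpand]
  exact sub_le_self _ (sq_nonneg _)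

lemma abs_expect_mul_mulVec_sub_le [Nonempty V] {P : Matrix V V ℝ} {μ : ℝ} (hμ : 0 ≤ μ)
    (hP : P *ᵥ 1 = 1) (hgap : ContractsMeanZero P μ) (u f : V → ℝ) :
    |𝔼 y, u y * (P *ᵥ f) y - (𝔼 y, u y) * 𝔼 y, f y| ≤
      μ * (√(𝔼 y, u y ^ 2) * √(𝔼 y, f y ^ 2)) := by
  set g : V → ℝ := fun y => f y - 𝔼 z, f z with hg
  have hg_mean : 𝔼 y, g y = 0 := by
    simp only [hg, expect_sub_distrib, Fintype.expect_const, sub_self]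
  have hPf (y : V) : (P *ᵥ f) y = (P *ᵥ g) y + 𝔼 z, f z := by
    have hf : f = g + (𝔼 z, f z) • (1 : V → ℝ) := by ext; simp [hg]
    conv_lhs => rw [hf, mulVec_add, mulVec_smul, hP]
    simp
  have hcov : 𝔼 y, u y * (P *ᵥ f) y - (𝔼 y, u y) * 𝔼 y, f y = 𝔼 y, u y * (P *ᵥ g) y := by
    simp only [hPf, mul_add, expect_add_distrib, ← expect_mul, add_sub_cancel_right]
  rw [hcov, mul_left_comm, ← Real.sqrt_sq hμ, ← Real.sqrt_mul (sq_nonneg μ),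
    ← Real.sqrt_mul (expect_nonneg fun _ _ => sq_nonneg _)]
  refine Real.abs_le_sqrt ?_
  calc (𝔼 y, u y * (P *ᵥ g) y) ^ 2
      ≤ (𝔼 y, u y ^ 2) * 𝔼 y, (P *ᵥ g) y ^ 2 := expect_mul_sq_le_sq_mul_sq _ _ _
    _ ≤ (𝔼 y, u y ^ 2) * (μ ^ 2 * 𝔼 y, f y ^ 2) := by
        have hPg := (hgap.expect_sq_mulVec_le hg_mean).trans
          (mul_le_mul_of_nonneg_left (expect_sq_sub_expect_le f) (sq_nonneg μ))
        exact mul_le_mul_of_nonneg_left hPg (expect_nonneg fun _ _ => sq_nonneg _)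

lemma expect_sq_mulVec_le [DecidableEq V] {P : Matrix V V ℝ} (hP : P ∈ doublyStochastic ℝ V)
    (f : V → ℝ) : 𝔼 y, (P *ᵥ f) y ^ 2 ≤ 𝔼 y, f y ^ 2 := by
  have hjensen (y : V) : (P *ᵥ f) y ^ 2 ≤ (P *ᵥ fun z => f z ^ 2) y :=
    Real.pow_arith_mean_le_arith_mean_pow_of_even univ (P y) f
      (fun _ _ => nonneg_of_mem_doublyStochastic hP) (sum_row_of_mem_doublyStochastic hP y)
      even_two
  simp only [Fintype.expect_eq_sum_div_card]
  gcongr ?_ / _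
  exact (sum_le_sum fun y _ => hjensen y).trans_eq (sum_mulVec_of_mem_doublyStochastic hP)

end Mixing

section Walks

variable {V : Type*} {m : ℕ} (P : Matrix V V ℝ)

/-- The weight of the tuple `x`: for a stochastic matrix `P`, the probability that the random walk
with transition matrix `P` started at `x 0` follows `x`. -/
def walkWeight (x : Fin (m + 1) → V) : ℝ := ∏ i : Fin m, P (x i.castSucc) (x i.succ)

lemma walkWeight_cons (y : V) (x : Fin (m + 1) → V) :
    walkWeight P (Fin.cons y x : Fin (m + 2) → V) = P y (x 0) * walkWeight P x := by
  simp [walkWeight, Fin.prod_univ_succ (n := m)]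

variable [Fintype V]

lemma expect_sum_fin_cons (F : (Fin (m + 1) → V) → ℝ) :
    𝔼 y, ∑ x : Fin m → V, F (Fin.cons y x) = (∑ x, F x) / Fintype.card V := by
  rw [Fintype.expect_eq_sum_div_card, ← (Fin.consEquiv fun _ => V).sum_comp,
    Fintype.sum_prod_type]
  rfl

/-- The average of `T` over the `m`-step random walk with transition matrix `P` started at a
uniformly random vertex. -/
noncomputable def walkExpect (T : (Fin (m + 1) → V) → ℝ) : ℝ :=
  (∑ x, walkWeight P x * T x) / Fintype.card V

lemma walkExpect_div (T : (Fin (m + 1) → V) → ℝ) (c : ℝ) :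
    walkExpect P (fun x => T x / c) = walkExpect P T / c := by
  simp only [walkExpect, ← mul_div_assoc, ← sum_div, div_right_comm]

lemma walkExpect_sum {L : Type*} [Fintype L] (T : L → (Fin (m + 1) → V) → ℝ) :
    walkExpect P (fun x => ∑ l, T l x) = ∑ l, walkExpect P (T l) := by
  simp only [walkExpect, mul_sum, ← sum_div]
  rw [sum_comm]

/-- The average of the rank-one tensor `x ↦ ∏ i, u i (x i)` over the `m`-step random walk with
transition matrix `P` started at `y`. -/
def walkExpectFrom (u : Fin (m + 1) → V → ℝ) (y : V) : ℝ :=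
  ∑ x : Fin m → V, walkWeight P (Fin.cons y x : Fin (m + 1) → V) *
    ∏ i, u i ((Fin.cons y x : Fin (m + 1) → V) i)

lemma expect_walkExpectFrom (u : Fin (m + 1) → V → ℝ) :
    𝔼 y, walkExpectFrom P u y = walkExpect P fun x => ∏ i, u i (x i) :=
  expect_sum_fin_cons fun x => walkWeight P x * ∏ i, u i (x i)

lemma walkExpectFrom_zero (u : Fin 1 → V → ℝ) : walkExpectFrom P u = u 0 := by
  ext y
  simp [walkExpectFrom, walkWeight]

lemma walkExpectFrom_succ (u : Fin (m + 2) → V → ℝ) (y : V) :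
    walkExpectFrom P u y = u 0 y * (P *ᵥ walkExpectFrom P (Fin.tail u)) y := by
  simp only [mulVec, dotProduct, mul_sum, walkExpectFrom]
  rw [← (Fin.consEquiv fun _ => V).sum_comp, Fintype.sum_prod_type]
  refine sum_congr rfl fun z _ => sum_congr rfl fun x _ => ?_
  simp only [Fin.consEquiv, Equiv.coe_fn_mk, walkWeight_cons, Fin.prod_univ_succ (n := m + 1),
    Fin.cons_zero, Fin.cons_succ, Fin.tail]
  ring

end Walks

section UnitRows

variable {α L : Type*} [Fintype L] {u : α → L → ℝ}

lemma sq_le_one_of_sum_sq_le_one (hu : ∀ a, ∑ l, u a l ^ 2 ≤ 1) (a : α) (l : L) :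
    u a l ^ 2 ≤ 1 :=
  (single_le_sum (fun k _ => sq_nonneg (u a k)) (mem_univ l)).trans (hu a)

variable [Fintype α] [Nonempty α]

lemma sum_expect_sq_le_one (hu : ∀ a, ∑ l, u a l ^ 2 ≤ 1) : ∑ l, 𝔼 a, u a l ^ 2 ≤ 1 := by
  rw [← expect_sum_comm]
  exact expect_le univ_nonempty fun a _ => hu a

lemma abs_expect_le_one (hu : ∀ a, ∑ l, u a l ^ 2 ≤ 1) (l : L) : |𝔼 a, u a l| ≤ 1 :=
  (abs_expect_le _ _).trans <| expect_le univ_nonempty fun a _ =>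
    (sq_le_one_iff_abs_le_one _).1 (sq_le_one_of_sum_sq_le_one hu a l)

end UnitRows

section WalkMixing

variable {V : Type*} [Fintype V] [Nonempty V] {P : Matrix V V ℝ} {μ : ℝ} {m : ℕ}

lemma abs_expect_walkExpectFrom_succ_sub_le (hμ : 0 ≤ μ) (hP : P *ᵥ 1 = 1)
    (hgap : ContractsMeanZero P μ) {u : Fin (m + 2) → V → ℝ} (hu : |𝔼 y, u 0 y| ≤ 1) :
    |𝔼 y, walkExpectFrom P u y - ∏ i, 𝔼 y, u i y| ≤
      μ * (√(𝔼 y, u 0 y ^ 2) * √(𝔼 y, walkExpectFrom P (Fin.tail u) y ^ 2)) +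
        |𝔼 y, walkExpectFrom P (Fin.tail u) y - ∏ i, 𝔼 y, Fin.tail u i y| := by
  set f := walkExpectFrom P (Fin.tail u)
  have hmix := abs_expect_mul_mulVec_sub_le hμ hP hgap (u 0) f
  simp only [walkExpectFrom_succ, Fin.prod_univ_succ (n := m + 1)]
  refine (abs_sub_le _ ((𝔼 y, u 0 y) * 𝔼 y, f y) _).trans (add_le_add hmix ?_)
  rw [← mul_sub, abs_mul]
  exact mul_le_of_le_one_left (abs_nonneg _) hu

variable [DecidableEq V] {L : Type*} [Fintype L]

lemma sum_expect_sq_walkExpectFrom_le (hP : P ∈ doublyStochastic ℝ V)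
    {U : Fin (m + 1) → V → L → ℝ} (hU : ∀ i a, ∑ l, U i a l ^ 2 ≤ 1) :
    ∑ l, 𝔼 y, walkExpectFrom P (fun i a => U i a l) y ^ 2 ≤ 1 := by
  induction m with
  | zero => simpa only [walkExpectFrom_zero] using sum_expect_sq_le_one (hU 0)
  | succ m ih =>
    refine le_trans (sum_le_sum fun l _ => ?_) (ih fun i => hU i.succ)
    set f := walkExpectFrom P fun (i : Fin (m + 1)) a => U i.succ a l
    calc 𝔼 y, walkExpectFrom P (fun i a => U i a l) y ^ 2
        = 𝔼 y, U 0 y l ^ 2 * (P *ᵥ f) y ^ 2 := by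
          simp only [walkExpectFrom_succ, mul_pow]; rfl
      _ ≤ 𝔼 y, (P *ᵥ f) y ^ 2 := expect_le_expect fun y _ =>
          mul_le_of_le_one_left (sq_nonneg _) (sq_le_one_of_sum_sq_le_one (hU 0) y l)
      _ ≤ 𝔼 y, f y ^ 2 := expect_sq_mulVec_le hP f

lemma sum_abs_expect_walkExpectFrom_sub_le (hμ : 0 ≤ μ) (hP : P ∈ doublyStochastic ℝ V)
    (hgap : ContractsMeanZero P μ) {U : Fin (m + 1) → V → L → ℝ}
    (hU : ∀ i a, ∑ l, U i a l ^ 2 ≤ 1) :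
    ∑ l, |𝔼 y, walkExpectFrom P (fun i a => U i a l) y - ∏ i, 𝔼 y, U i y l| ≤ m * μ := by
  induction m with
  | zero => simp [walkExpectFrom_zero]
  | succ m ih =>
    set f : L → V → ℝ := fun l => walkExpectFrom P fun (i : Fin (m + 1)) a => U i.succ a l
    have hcauchy : ∑ l, √(𝔼 y, U 0 y l ^ 2) * √(𝔼 y, f l y ^ 2) ≤ 1 :=
      (Real.sum_sqrt_mul_sqrt_le univ (fun l => expect_nonneg fun _ _ => sq_nonneg _)
        fun l => expect_nonneg fun _ _ => sq_nonneg _).trans <|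
      mul_le_one₀ (Real.sqrt_le_one.2 (sum_expect_sq_le_one (hU 0))) (Real.sqrt_nonneg _)
        (Real.sqrt_le_one.2 (sum_expect_sq_walkExpectFrom_le hP fun i => hU i.succ))
    calc ∑ l, |𝔼 y, walkExpectFrom P (fun i a => U i a l) y - ∏ i, 𝔼 y, U i y l|
        ≤ ∑ l, (μ * (√(𝔼 y, U 0 y l ^ 2) * √(𝔼 y, f l y ^ 2)) +
            |𝔼 y, f l y - ∏ i : Fin (m + 1), 𝔼 y, U i.succ y l|) :=
          sum_le_sum fun l _ => abs_expect_walkExpectFrom_succ_sub_le hμ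
            (mulVec_one_of_mem_doublyStochastic hP) hgap (abs_expect_le_one (hU 0) l)
      _ ≤ μ * 1 + m * μ := by
          rw [sum_add_distrib, ← mul_sum]
          exact add_le_add (mul_le_mul_of_nonneg_left hcauchy hμ) (ih fun i => hU i.succ)
      _ = (m + 1 : ℕ) * μ := by push_cast; ring

end WalkMixing

section Factorizations

variable {ι : Type*} [Fintype ι] {α : ι → Type*}

/-- The tensor `T` has a factorization all of whose factors have rows of `ℓ²`-norm at most `1`, so
`T` lies in the unit ball of the max-quasinorm. The rank-one terms are indexed by any finite type,
which makes sums and products of factorizations available as `L₁ ⊕ L₂` and `L₁ × L₂`. -/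
def HasUnitFactorization (T : (∀ i, α i) → ℝ) : Prop :=
  ∃ (L : Type) (_ : Fintype L) (U : ∀ i, α i → L → ℝ),
    (∀ i a, ∑ l, U i a l ^ 2 ≤ 1) ∧ ∀ x, T x = ∑ l, ∏ i, U i (x i) l

namespace HasUnitFactorization

variable {S T : (∀ i, α i) → ℝ}

lemma mul (hS : HasUnitFactorization S) (hT : HasUnitFactorization T) :
    HasUnitFactorization fun x => S x * T x := by
  obtain ⟨L₁, _, U₁, hU₁, hS⟩ := hS
  obtain ⟨L₂, _, U₂, hU₂, hT⟩ := hT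
  refine ⟨L₁ × L₂, inferInstance, fun i a l => U₁ i a l.1 * U₂ i a l.2, fun i a => ?_, fun x => ?_⟩
  · simp only [mul_pow, Fintype.sum_prod_type, ← mul_sum, ← sum_mul]
    exact mul_le_one₀ (hU₁ i a) (sum_nonneg fun _ _ => sq_nonneg _) (hU₂ i a)
  · simp only [hS, hT, sum_mul_sum, Fintype.sum_prod_type, prod_mul_distrib]

lemma add_div_sqrt_two_pow (hS : HasUnitFactorization S) (hT : HasUnitFactorization T) :
    HasUnitFactorization fun x => (S x + T x) / √2 ^ Fintype.card ι := by
  obtain ⟨L₁, _, U₁, hU₁, hS⟩ := hS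
  obtain ⟨L₂, _, U₂, hU₂, hT⟩ := hT
  refine ⟨L₁ ⊕ L₂, inferInstance, fun i a l => Sum.elim (U₁ i a) (U₂ i a) l / √2, fun i a => ?_,
    fun x => ?_⟩
  · simp only [div_pow, ← sum_div, Fintype.sum_sum_type, Sum.elim_inl, Sum.elim_inr,
      Real.sq_sqrt zero_le_two]
    linarith [hU₁ i a, hU₂ i a]
  · simp only [hS, hT, prod_div_distrib, prod_const, card_univ, ← sum_div, Fintype.sum_sum_type,
      Sum.elim_inl, Sum.elim_inr]

lemma const_mul [Nonempty ι] (hT : HasUnitFactorization T) {k : ℝ} (hk : |k| ≤ 1) :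
    HasUnitFactorization fun x => k * T x := by
  classical
  obtain ⟨L, _, U, hU, hT⟩ := hT
  let i₀ := Classical.arbitrary ι
  refine ⟨L, inferInstance, fun i a l => (if i = i₀ then k else 1) * U i a l, fun i a => ?_,
    fun x => ?_⟩
  · have hscale : (if i = i₀ then k else 1) ^ 2 ≤ 1 := by
      split_ifs
      exacts [(sq_le_one_iff_abs_le_one k).2 hk, (one_pow 2).le]
    simp only [mul_pow, ← mul_sum]
    exact mul_le_one₀ hscale (sum_nonneg fun _ _ => sq_nonneg _) (hU i a)
  · simp only [hT, prod_mul_distrib, prod_ite_eq', mem_univ, if_true, mul_sum]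

lemma sq_sub_div_two_pow [Nonempty ι] (hS : HasUnitFactorization S)
    (hT : HasUnitFactorization T) :
    HasUnitFactorization fun x => (S x - T x) ^ 2 / 2 ^ Fintype.card ι := by
  have hsub := hS.add_div_sqrt_two_pow (hT.const_mul (k := -1) (by simp))
  convert hsub.mul hsub using 2 with x
  rw [← sq, div_pow, ← pow_mul, mul_comm _ 2, pow_mul, Real.sq_sqrt zero_le_two, neg_one_mul,
    sub_eq_add_neg]

end HasUnitFactorization

end Factorizations

lemma HasUnitFactorization.abs_walkExpect_sub_expect_le {V : Type*} [Fintype V] [DecidableEq V]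
    [Nonempty V] {P : Matrix V V ℝ} {μ : ℝ} {m : ℕ} {T : (Fin (m + 1) → V) → ℝ}
    (hT : HasUnitFactorization T) (hμ : 0 ≤ μ) (hP : P ∈ doublyStochastic ℝ V)
    (hgap : ContractsMeanZero P μ) : |walkExpect P T - 𝔼 x, T x| ≤ m * μ := by
  obtain ⟨L, _, U, hU, hT⟩ := hT
  obtain rfl : T = fun x => ∑ l, ∏ i, U i (x i) l := funext hT
  have hprod (l : L) : 𝔼 x : Fin (m + 1) → V, ∏ i, U i (x i) l = ∏ i, 𝔼 y, U i y l := by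
    simp [Fintype.expect_eq_sum_div_card, prod_univ_sum, prod_div_distrib]
  have hsum := sum_abs_expect_walkExpectFrom_sub_le hμ hP hgap hU
  simp only [expect_walkExpectFrom, ← hprod] at hsum
  rw [expect_sum_comm, walkExpect_sum, ← sum_sub_distrib]
  exact (abs_sum_le_sum_abs _ _).trans hsum

section MaxQuasinorm

lemma rowTwoInf_nonneg {α : Type*} {r : ℕ} (U : α → Fin r → ℝ) : 0 ≤ rowTwoInf U :=
  Real.iSup_nonneg fun _ => Real.sqrt_nonneg _

lemma sum_sq_le_rowTwoInf_sq {α : Type*} [Finite α] {r : ℕ} (U : α → Fin r → ℝ) (a : α) :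
    ∑ l, U a l ^ 2 ≤ rowTwoInf U ^ 2 :=
  (Real.sqrt_le_left (rowTwoInf_nonneg U)).1 <|
    le_ciSup (Set.finite_range fun a => √(∑ l, U a l ^ 2)).bddAbove a

lemma eq_zero_of_rowTwoInf_eq_zero {α : Type*} [Finite α] {r : ℕ} {U : α → Fin r → ℝ}
    (hU : rowTwoInf U = 0) (a : α) (l : Fin r) : U a l = 0 := by
  have hrow : U a l ^ 2 ≤ rowTwoInf U ^ 2 :=
    (single_le_sum (fun k _ => sq_nonneg (U a k)) (mem_univ l)).trans (sum_sq_le_rowTwoInf_sq U a)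
  rw [hU, zero_pow two_ne_zero] at hrow
  exact sq_nonpos_iff _ |>.1 hrow

variable {t : ℕ} {n : Fin t → ℕ}

lemma maxQnorm_nonneg (T : (∀ i, Fin (n i)) → ℝ) : 0 ≤ maxQnorm T := by
  refine Real.sInf_nonneg ?_
  rintro _ ⟨r, U, -, rfl⟩
  exact prod_nonneg fun i _ => rowTwoInf_nonneg _

lemma hasUnitFactorization_div_prod_rowTwoInf {r : ℕ} (U : ∀ i, Fin (n i) → Fin r → ℝ) :
    HasUnitFactorization fun x : ∀ i, Fin (n i) =>
      (∑ l, ∏ i, U i (x i) l) / ∏ i, rowTwoInf (U i) := by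
  refine ⟨Fin r, inferInstance, fun i a l => U i a l / rowTwoInf (U i), fun i a => ?_, fun x => ?_⟩
  · simp only [div_pow, ← sum_div]
    exact div_le_one_of_le₀ (sum_sq_le_rowTwoInf_sq (U i) a) (sq_nonneg _)
  · simp only [prod_div_distrib, sum_div]

variable [NeZero t]

lemma exists_eq_sum_prod (T : (∀ i, Fin (n i)) → ℝ) :
    ∃ (r : ℕ) (U : ∀ i, Fin (n i) → Fin r → ℝ), ∀ x, T x = ∑ l, ∏ i, U i (x i) l := by
  let e := Fintype.equivFin (∀ i, Fin (n i))
  refine ⟨_, fun i a l => (if a = e.symm l i then 1 else 0) * if i = 0 then T (e.symm l) else 1,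
    fun x => ?_⟩
  rw [e.symm.sum_comp fun y => ∏ i, (if x i = y i then (1 : ℝ) else 0) * if i = 0 then T y else 1,
    sum_eq_single_of_mem x (mem_univ x)]
  · simp
  · intro y _ hy
    obtain ⟨i, hi⟩ := Function.ne_iff.1 hy
    exact prod_eq_zero (mem_univ i) (by simp [hi.symm])

lemma hasUnitFactorization_div_of_maxQnorm_lt {T : (∀ i, Fin (n i)) → ℝ} {c : ℝ}
    (hc : maxQnorm T < c) : HasUnitFactorization fun x => T x / c := by
  have hc_pos : 0 < c := (maxQnorm_nonneg T).trans_lt hc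
  obtain ⟨r₀, U₀, hU₀⟩ := exists_eq_sum_prod T
  obtain ⟨_, ⟨r, U, hT, rfl⟩, hlt⟩ := exists_lt_of_csInf_lt (by exact ⟨_, r₀, U₀, hU₀, rfl⟩) hc
  set a := ∏ i, rowTwoInf (U i) with ha
  have ha_nonneg : 0 ≤ a := prod_nonneg fun i _ => rowTwoInf_nonneg _
  have hT_cancel (x : ∀ i, Fin (n i)) : a * ((∑ l, ∏ i, U i (x i) l) / a) = T x := by
    rw [hT]
    refine mul_div_cancel_of_imp' fun ha_zero => ?_
    obtain ⟨i, -, hi⟩ := prod_eq_zero_iff.1 ha_zero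
    exact sum_eq_zero fun l _ => prod_eq_zero (mem_univ i) (eq_zero_of_rowTwoInf_eq_zero hi _ l)
  have hscale : |a / c| ≤ 1 := by
    rw [abs_of_nonneg (by positivity)]
    exact (div_le_one hc_pos).2 hlt.le
  convert (hasUnitFactorization_div_prod_rowTwoInf U).const_mul hscale using 2 with x
  rw [← ha, div_mul_eq_mul_div, hT_cancel]

end MaxQuasinorm

section Completion

variable {n : ℕ} [NeZero n] {m : ℕ} {P : Matrix (Fin n) (Fin n) ℝ} {μ : ℝ}
  {S T : (Fin (m + 1) → Fin n) → ℝ}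

lemma expect_sq_sub_le_of_maxQnorm_lt (hμ : 0 ≤ μ) (hP : P ∈ doublyStochastic ℝ (Fin n))
    (hgap : ContractsMeanZero P μ) {c : ℝ} (hS : maxQnorm (n := fun _ => n) S < c)
    (hT : maxQnorm (n := fun _ => n) T < c) :
    𝔼 x, (S x - T x) ^ 2 ≤
      walkExpect P (fun x => (S x - T x) ^ 2) + 2 ^ (m + 1) * m * c ^ 2 * μ := by
  have hc_pos : 0 < c := (maxQnorm_nonneg (n := fun _ => n) S).trans_lt hS
  have hunit : HasUnitFactorization fun x : Fin (m + 1) → Fin n =>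
      (S x - T x) ^ 2 / (2 ^ (m + 1) * c ^ 2) := by
    convert (hasUnitFactorization_div_of_maxQnorm_lt hS).sq_sub_div_two_pow
      (hasUnitFactorization_div_of_maxQnorm_lt hT) using 2 with x
    rw [← sub_div, div_pow, div_div, Fintype.card_fin, mul_comm]
  have hdev := (abs_le.1 (hunit.abs_walkExpect_sub_expect_le hμ hP hgap)).1
  rw [walkExpect_div, ← expect_div, ← sub_div, le_div_iff₀ (by positivity)] at hdev
  linarith

lemma expect_sq_sub_le_walkExpect_add (hμ : 0 ≤ μ) (hP : P ∈ doublyStochastic ℝ (Fin n))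
    (hgap : ContractsMeanZero P μ) {M : ℝ} (hS : maxQnorm (n := fun _ => n) S ≤ M)
    (hT : maxQnorm (n := fun _ => n) T ≤ M) :
    𝔼 x, (S x - T x) ^ 2 ≤
      walkExpect P (fun x => (S x - T x) ^ 2) + 2 ^ (m + 1) * m * M ^ 2 * μ := by
  have hcont : Continuous fun c : ℝ =>
      walkExpect P (fun x => (S x - T x) ^ 2) + 2 ^ (m + 1) * m * c ^ 2 * μ := by fun_prop
  exact ge_of_tendsto (hcont.continuousWithinAt (s := Set.Ioi M) (x := M)) <|
    Filter.eventually_of_mem self_mem_nhdsWithin fun c hc =>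
      expect_sq_sub_le_of_maxQnorm_lt hμ hP hgap (hS.trans_lt hc) (hT.trans_lt hc)

end Completion

section RegularGraph

lemma inv_smul_adjMatrix_mem_doublyStochastic {V : Type*} [Fintype V] [DecidableEq V]
    {G : SimpleGraph V} [DecidableRel G.Adj] {d : ℕ} (hreg : G.IsRegularOfDegree d)
    (hd : d ≠ 0) : (d : ℝ)⁻¹ • G.adjMatrix ℝ ∈ doublyStochastic ℝ V := by
  have hd' : (d : ℝ) ≠ 0 := Nat.cast_ne_zero.2 hd
  have hrow : G.adjMatrix ℝ *ᵥ 1 = (d : ℝ) • (1 : V → ℝ) := by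
    ext v
    simpa using G.adjMatrix_mulVec_const_apply_of_regular (α := ℝ) (a := 1) hreg (v := v)
  have hcol : 1 ᵥ* G.adjMatrix ℝ = (d : ℝ) • (1 : V → ℝ) := by
    rw [← mulVec_transpose, G.transpose_adjMatrix, hrow]
  refine mem_doublyStochastic.2 ⟨fun i j => ?_, ?_, ?_⟩
  · rw [Matrix.smul_apply, G.adjMatrix_apply]
    positivity
  · rw [smul_mulVec, hrow, inv_smul_smul₀ hd']
  · rw [vecMul_smul, hcol, inv_smul_smul₀ hd']

variable {n m : ℕ} (G : SimpleGraph (Fin n)) [DecidableRel G.Adj]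

lemma walkWeight_smul_adjMatrix (c : ℝ) (x : Fin (m + 1) → Fin n) :
    walkWeight (c • G.adjMatrix ℝ) x = if walkEdge G x then c ^ m else 0 := by
  have hedge : walkEdge G x ↔ ∀ i : Fin m, G.Adj (x i.castSucc) (x i.succ) := Iff.rfl
  simp only [walkWeight, Matrix.smul_apply, SimpleGraph.adjMatrix_apply, smul_eq_mul, mul_ite,
    mul_one, mul_zero, prod_ite_zero, mem_univ, forall_true_left, prod_const, card_univ,
    Fintype.card_fin, hedge]

lemma walkExpect_inv_smul_adjMatrix (d : ℕ) (T : (Fin (m + 1) → Fin n) → ℝ) :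
    walkExpect ((d : ℝ)⁻¹ • G.adjMatrix ℝ) T =
      1 / (n * (d : ℝ) ^ m) * ∑ x with walkEdge G x, T x := by
  simp only [walkExpect, walkWeight_smul_adjMatrix, ite_mul, zero_mul, ← sum_filter, ← mul_sum,
    Fintype.card_fin, inv_pow]
  field_simp

end RegularGraph

lemma natCast_le_two_mul_sub_three_mul_pow {m : ℕ} (hm : 1 ≤ m) :
    (m : ℝ) ≤ (2 * (m + 1 : ℕ) - 3) * 1.783 ^ m := by
  have hm' : (1 : ℝ) ≤ m := mod_cast hm
  have hbernoulli : 1 + (m : ℝ) * 0.783 ≤ 1.783 ^ m := by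
    have h := one_add_mul_le_pow (a := (0.783 : ℝ)) (by norm_num) m
    norm_num at h ⊢
    exact h
  push_cast
  nlinarith

theorem tensor_completion_walk_hypergraph_general (t n d : ℕ) (ht : 1 ≤ t) (hn : 0 < n)
    (hd : 0 < d) (G : SimpleGraph (Fin n)) [DecidableRel G.Adj] (hreg : G.IsRegularOfDegree d)
    (lam : ℝ) (hlam0 : 0 ≤ lam) (hlam : ContractsMeanZero (G.adjMatrix ℝ) lam)
    (T That : (Fin t → Fin n) → ℝ) (M : ℝ) (hThat : maxQnorm (n := fun _ => n) That ≤ M)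
    (hT : maxQnorm (n := fun _ => n) T ≤ M) :
    (1 / (n : ℝ) ^ t) * ∑ x : Fin t → Fin n, (That x - T x) ^ 2 ≤
      1 / (n * (d : ℝ) ^ (t - 1)) * ∑ x with walkEdge G x, (That x - T x) ^ 2 +
        2 ^ t * ((t : ℝ) - 1) * M ^ 2 * (lam / d) := by
  obtain ⟨m, rfl⟩ := Nat.exists_eq_add_of_le' ht
  have : NeZero n := ⟨hn.ne'⟩
  have hmix := expect_sq_sub_le_walkExpect_add (by positivity)
    (inv_smul_adjMatrix_mem_doublyStochastic hreg hd.ne') (hlam.smul (d : ℝ)⁻¹) hThat hT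
  rw [walkExpect_inv_smul_adjMatrix, Fintype.expect_eq_sum_div_card] at hmix
  simpa [div_eq_inv_mul] using hmix

/-- Deterministic tensor completion with the walk hypergraph of a `d`-regular
expander graph: max-quasinorm minimization error bound. -/
theorem tensor_completion_walk_hypergraph (t n d : ℕ) (ht : 2 ≤ t)
    (G : SimpleGraph (Fin n)) [DecidableRel G.Adj]
    (hconn : G.Connected) (hreg : G.IsRegularOfDegree d)
    (lam : ℝ) (hlam0 : 0 < lam) (hlamd : lam < d)
    -- `lam` bounds (in absolute value) all adjacency eigenvalues on the
    -- orthogonal complement of the all-ones vector, i.e. the second-largest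
    -- eigenvalue in absolute value is at most `lam`:
    (hlam : ∀ u : Fin n → ℝ, ∑ i, u i = 0 →
      ∑ j, ((G.adjMatrix ℝ).mulVec u j) ^ 2 ≤ lam ^ 2 * ∑ i, (u i) ^ 2)
    (T That : (Fin t → Fin n) → ℝ)
    (hagree : ∀ v : Fin t → Fin n, walkEdge G v → That v = T v)
    (hmin : maxQnorm (n := fun _ => n) That ≤ maxQnorm (n := fun _ => n) T) :
    (1 / (n : ℝ) ^ t) * ∑ x : Fin t → Fin n, (That x - T x) ^ 2 ≤
      2 ^ t * (2 * (t : ℝ) - 3) * 1.783 ^ (t - 1) *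
        (maxQnorm (n := fun _ => n) T) ^ 2 * (lam / d) := by
  obtain ⟨m, rfl⟩ := Nat.exists_eq_add_of_le' (one_le_two.trans ht)
  have hn : 0 < n := Fin.pos_iff_nonempty.2 hconn.nonempty
  have hd : 0 < d := Nat.cast_pos.1 (hlam0.trans hlamd)
  refine (tensor_completion_walk_hypergraph_general (m + 1) n d le_add_self hn hd G hreg lam
    hlam0.le hlam T That _ hmin le_rfl).trans ?_
  rw [sum_eq_zero fun x hx => by simp [hagree x (mem_filter.1 hx).2], mul_zero, zero_add,
    mul_assoc (2 ^ (m + 1)) _ (1.783 ^ _)]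
  gcongr
  simpa using natCast_le_two_mul_sub_three_mul_pow (Nat.le_of_succ_le_succ ht)
end

section
/- Let t ≥ 2, let G be a connected d-regular graph on n vertices with adjacency-matrix second-largest eigenvalue in absolute value λ ∈ (0,d), and let H be its walk hypergraph with parts V_1,…,V_t. For any non-empty subsets W_i ⊆ V_i with α_i := |W_i|/n, letting e(W_1,…,W_t) denote the number of hyperedges (v_1,…,v_t) with v_i ∈ W_i for all i, one has | e(W_1,…,W_t)/(n·d^{t−1}) − ∏_{i=1}^t α_i | ≤ (λ/d)·( √(α_1(1−α_1)α_2(1−α_2))·∏_{k=3}^t α_k + Σ_{i=3}^t √(α_1 α_i (1−α_i))·∏_{k=i+1}^t α_k ), and this quantity is at most (2t−3)·λ/(4d). -/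
open Classical

/-!
Write `P` for the adjacency matrix divided by `d`; it is doubly stochastic. The mass that the walks
confined to `W₁, …, Wₖ` put on their endpoint satisfies `fₖ₊₁ = 1_{Wₖ₊₁} · (fₖ P)`, and its mean is
the normalized count of such walks. Because `P` shrinks mean-zero functions by the factor `λ / d`,
replacing `𝔼 fₖ₊₁` by `αₖ₊₁ 𝔼 fₖ` costs at most `(λ / d) √(Var fₖ · αₖ₊₁ (1 - αₖ₊₁))`. Here `Var f₁`
is `α₁ (1 - α₁)`, while for later `k` one only has `Var fₖ ≤ 𝔼 fₖ² ≤ 𝔼 f₁² = α₁`. Nothing in this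
requires `W` to be a family of sets: weight functions with values in `[0, 1]` serve as well.
-/

namespace WalkMixing

open Finset Matrix
open scoped BigOperators

section Variance

variable {V : Type*} [Fintype V]

/-- The variance of `f` under the uniform distribution on the finite type `V`. -/
noncomputable def uniformVariance (f : V → ℝ) : ℝ :=
  𝔼 x, (f x - 𝔼 y, f y) ^ 2

lemma uniformVariance_nonneg (f : V → ℝ) : 0 ≤ uniformVariance f :=
  expect_nonneg fun _ _ => sq_nonneg _

lemma expect_sq_le_expect {f : V → ℝ} (hf₀ : 0 ≤ f) (hf₁ : f ≤ 1) :
    𝔼 x, f x ^ 2 ≤ 𝔼 x, f x :=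
  expect_le_expect fun x _ => pow_le_of_le_one (hf₀ x) (hf₁ x) two_ne_zero

variable [Nonempty V]

lemma expect_sub_mul_sub (f g : V → ℝ) :
    𝔼 x, (f x - 𝔼 y, f y) * (g x - 𝔼 y, g y) = 𝔼 x, f x * g x - (𝔼 x, f x) * 𝔼 x, g x := by
  simp only [sub_mul, mul_sub, expect_sub_distrib, ← mul_expect, ← expect_mul,
    Fintype.expect_const]
  ring

lemma sq_expect_mul_sub_le (f g : V → ℝ) :
    (𝔼 x, f x * g x - (𝔼 x, f x) * 𝔼 x, g x) ^ 2 ≤ uniformVariance f * uniformVariance g := by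
  rw [← expect_sub_mul_sub]
  exact expect_mul_sq_le_sq_mul_sq univ _ _

lemma uniformVariance_eq (f : V → ℝ) :
    uniformVariance f = 𝔼 x, f x ^ 2 - (𝔼 x, f x) ^ 2 := by
  simpa only [uniformVariance, sq] using expect_sub_mul_sub f f

lemma uniformVariance_le_expect_sq (f : V → ℝ) : uniformVariance f ≤ 𝔼 x, f x ^ 2 := by
  rw [uniformVariance_eq]
  exact sub_le_self _ (sq_nonneg _)

lemma uniformVariance_le_expect_mul_one_sub {f : V → ℝ} (hf₀ : 0 ≤ f) (hf₁ : f ≤ 1) :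
    uniformVariance f ≤ (𝔼 x, f x) * (1 - 𝔼 x, f x) := by
  rw [uniformVariance_eq]
  linarith [expect_sq_le_expect hf₀ hf₁]

end Variance

section ExpanderMixing

variable {V : Type*} [Fintype V] {A P : Matrix V V ℝ} {c lam μ : ℝ}

/-- The matrix `A` maps each function of mean zero to one of Euclidean norm at most `lam` times as
large. For the adjacency matrix of a regular graph, this says that all eigenvalues other than the
trivial one have absolute value at most `lam`. -/
def MeanZeroBound (A : Matrix V V ℝ) (lam : ℝ) : Prop :=
  ∀ u : V → ℝ, ∑ x, u x = 0 → ∑ x, (A *ᵥ u) x ^ 2 ≤ lam ^ 2 * ∑ x, u x ^ 2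

lemma MeanZeroBound.of_smul (hc : 0 < c) (hA : MeanZeroBound (c • A) lam) :
    MeanZeroBound A (lam / c) := by
  intro u hu
  have h := hA u hu
  simp only [smul_mulVec, Pi.smul_apply, smul_eq_mul, mul_pow, ← mul_sum] at h
  rw [div_pow, div_mul_eq_mul_div, le_div_iff₀ (by positivity), mul_comm]
  exact h

lemma expect_mulVec (hcol : 1 ᵥ* P = 1) (f : V → ℝ) : 𝔼 x, (P *ᵥ f) x = 𝔼 x, f x := by
  have h : ∑ x, (P *ᵥ f) x = ∑ x, f x := by
    rw [← one_dotProduct, dotProduct_mulVec, hcol, one_dotProduct]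
  rw [Fintype.expect_eq_sum_div_card, h, ← Fintype.expect_eq_sum_div_card]

variable [Nonempty V]

lemma uniformVariance_mulVec_le (hrow : P *ᵥ 1 = 1) (hcol : 1 ᵥ* P = 1) (hμ : MeanZeroBound P μ)
    (f : V → ℝ) : uniformVariance (P *ᵥ f) ≤ μ ^ 2 * uniformVariance f := by
  set m := 𝔼 x, f x with hm
  have hmean : ∑ x, (f x - m) = 0 := by
    rw [← Fintype.card_mul_expect, expect_sub_distrib, Fintype.expect_const, sub_self, mul_zero]
  have hcenter (x : V) : (P *ᵥ fun y => f y - m) x = (P *ᵥ f) x - m := by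
    have : (fun y => f y - m) = f - m • 1 := by ext y; simp
    rw [this, mulVec_sub, mulVec_smul, hrow]
    simp
  have hsum := hμ _ hmean
  simp only [hcenter] at hsum
  rw [uniformVariance, uniformVariance, expect_mulVec hcol, ← hm, Fintype.expect_eq_sum_div_card,
    Fintype.expect_eq_sum_div_card, ← mul_div_assoc]
  gcongr

theorem abs_expect_mul_mulVec_sub_le (hrow : P *ᵥ 1 = 1) (hcol : 1 ᵥ* P = 1) (hμ₀ : 0 ≤ μ)
    (hμ : MeanZeroBound P μ) (f g : V → ℝ) :
    |𝔼 x, f x * (P *ᵥ g) x - (𝔼 x, f x) * 𝔼 x, g x| ≤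
      μ * √(uniformVariance f * uniformVariance g) := by
  calc
    _ = |𝔼 x, f x * (P *ᵥ g) x - (𝔼 x, f x) * 𝔼 x, (P *ᵥ g) x| := by rw [expect_mulVec hcol]
    _ ≤ √(uniformVariance f * uniformVariance (P *ᵥ g)) :=
      Real.abs_le_sqrt (sq_expect_mul_sub_le _ _)
    _ ≤ √(μ ^ 2 * (uniformVariance f * uniformVariance g)) := by
      rw [mul_left_comm]
      gcongr
      · exact uniformVariance_nonneg f
      · exact uniformVariance_mulVec_le hrow hcol hμ g
    _ = μ * √(uniformVariance f * uniformVariance g) := by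
      rw [Real.sqrt_mul (sq_nonneg μ), Real.sqrt_sq hμ₀]

end ExpanderMixing

lemma expect_sq_vecMul_le {V : Type*} [Fintype V] [DecidableEq V] {P : Matrix V V ℝ}
    (hP : P ∈ doublyStochastic ℝ V) (f : V → ℝ) :
    𝔼 x, (f ᵥ* P) x ^ 2 ≤ 𝔼 x, f x ^ 2 := by
  have jensen (x : V) : (f ᵥ* P) x ^ 2 ≤ (Pᵀ *ᵥ fun y => f y ^ 2) x := by
    rw [← mulVec_transpose]
    exact Real.pow_arith_mean_le_arith_mean_pow_of_even univ _ f
      (fun y _ => nonneg_of_mem_doublyStochastic hP) (sum_col_of_mem_doublyStochastic hP x)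
      even_two
  refine (expect_le_expect fun x _ => jensen x).trans_eq (expect_mulVec ?_ _)
  rw [vecMul_transpose, mulVec_one_of_mem_doublyStochastic hP]

section WalkWeight

variable {V R : Type*} [CommSemiring R]

/-- The weight of the walk `(v 0, …, v k)` for the edge weights `A` and the vertex weights `w i`,
which may depend on the time `i`. For an adjacency matrix and the indicators of sets `W i`, it is
`1` or `0` according to whether `v` is a walk with `v i ∈ W i` for all `i`. -/
def walkWeight (A : Matrix V V R) (w : ℕ → V → R) {k : ℕ} (v : Fin (k + 1) → V) : R :=
  (∏ i : Fin (k + 1), w i (v i)) * ∏ i : Fin k, A (v i.castSucc) (v i.succ)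

lemma walkWeight_snoc (A : Matrix V V R) (w : ℕ → V → R) {k : ℕ} (v : Fin (k + 1) → V) (x : V) :
    walkWeight A w (Fin.snoc v x : Fin (k + 2) → V) =
      walkWeight A w v * (A (v (Fin.last k)) x * w (k + 1) x) := by
  simp only [walkWeight, Fin.prod_univ_castSucc (n := k + 1), Fin.prod_univ_castSucc (n := k),
    Fin.succ_castSucc, Fin.succ_last, Fin.snoc_castSucc, Fin.snoc_last, Fin.val_castSucc,
    Fin.val_last]
  ring

lemma walkWeight_smul (c : R) (A : Matrix V V R) (w : ℕ → V → R) {k : ℕ} (v : Fin (k + 1) → V) :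
    walkWeight (c • A) w v = c ^ k * walkWeight A w v := by
  simp only [walkWeight, Matrix.smul_apply, smul_eq_mul, prod_mul_distrib, prod_const, card_univ,
    Fintype.card_fin]
  ring

variable [Fintype V]

/-- The total `walkWeight` of the walks `(v 0, …, v k)` with a given endpoint `v k`, computed by
transfer matrices. -/
def walkMass (A : Matrix V V R) (w : ℕ → V → R) : ℕ → V → R
  | 0 => w 0
  | k + 1 => (walkMass A w k ᵥ* A) * w (k + 1)

-- A test function `φ` of the endpoint makes the induction go through.
lemma sum_walkWeight_mul_last (A : Matrix V V R) (w : ℕ → V → R) (k : ℕ) (φ : V → R) :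
    ∑ v : Fin (k + 1) → V, walkWeight A w v * φ (v (Fin.last k)) = walkMass A w k ⬝ᵥ φ := by
  induction k generalizing φ with
  | zero =>
    rw [← (Equiv.funUnique (Fin 1) V).symm.sum_comp]
    simp [walkWeight, walkMass, dotProduct]
  | succ k ih =>
    calc
      ∑ v : Fin (k + 2) → V, walkWeight A w v * φ (v (Fin.last (k + 1)))
        = ∑ v : Fin (k + 1) → V, ∑ x,
            walkWeight A w v * (A (v (Fin.last k)) x * w (k + 1) x) * φ x := by
        rw [← (Fin.snocEquiv fun _ => V).sum_comp, Fintype.sum_prod_type_right]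
        refine sum_congr rfl fun v _ => sum_congr rfl fun x _ => ?_
        exact congrArg₂ (· * ·) (walkWeight_snoc A w v x)
          (congrArg φ (Fin.snoc_last (α := fun _ => V) x v))
      _ = ∑ v : Fin (k + 1) → V,
            walkWeight A w v * (A *ᵥ (w (k + 1) * φ)) (v (Fin.last k)) := by
        simp only [mulVec, dotProduct, mul_sum, Pi.mul_apply, mul_assoc]
      _ = walkMass A w (k + 1) ⬝ᵥ φ := by
        rw [ih, dotProduct_mulVec]
        simp only [walkMass, dotProduct, Pi.mul_apply, mul_assoc]

lemma sum_walkWeight (A : Matrix V V R) (w : ℕ → V → R) (k : ℕ) :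
    ∑ v : Fin (k + 1) → V, walkWeight A w v = ∑ x, walkMass A w k x := by
  simpa only [Pi.one_apply, mul_one, dotProduct_one] using sum_walkWeight_mul_last A w k 1

end WalkWeight

section Graph

variable {n k : ℕ} (R : Type*) [CommSemiring R] (G : SimpleGraph (Fin n)) [DecidableRel G.Adj]
  (W : ℕ → Finset (Fin n))

lemma walkWeight_adjMatrix_indicator (v : Fin (k + 1) → Fin n) :
    walkWeight (G.adjMatrix R) (fun i => (W i : Set (Fin n)).indicator 1) v =
      if walkEdge G v ∧ ∀ i : Fin (k + 1), v i ∈ W i then 1 else 0 := by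
  have hedge : walkEdge G v ↔ ∀ i : Fin k, G.Adj (v i.castSucc) (v i.succ) := Iff.rfl
  simp only [walkWeight, Set.indicator_apply, mem_coe, Pi.one_apply, SimpleGraph.adjMatrix_apply,
    Fintype.prod_boole, ← hedge, ite_and, mul_ite, mul_one, mul_zero]
  congr

lemma sum_walkWeight_adjMatrix_indicator :
    ∑ v : Fin (k + 1) → Fin n,
        walkWeight (G.adjMatrix R) (fun i => (W i : Set (Fin n)).indicator 1) v =
      #{v : Fin (k + 1) → Fin n | walkEdge G v ∧ ∀ i : Fin (k + 1), v i ∈ W i} := by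
  simp only [walkWeight_adjMatrix_indicator, sum_boole]

end Graph

lemma sum_adjMatrix_row (R : Type*) [NonAssocSemiring R] {V : Type*} [Fintype V]
    {G : SimpleGraph V} [DecidableRel G.Adj] {d : ℕ} (hreg : G.IsRegularOfDegree d) (x : V) :
    ∑ y, G.adjMatrix R x y = d := by
  rw [← dotProduct_one, SimpleGraph.adjMatrix_dotProduct]
  simp only [Pi.one_apply, sum_const, nsmul_one, SimpleGraph.card_neighborFinset_eq_degree, hreg x]

section MixingError

/-- The bracket of the mixing estimate for `t` vertex sets of densities `α 0, …, α (t - 1)`. -/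
noncomputable def mixingError (α : ℕ → ℝ) (t : ℕ) : ℝ :=
  √(α 0 * (1 - α 0) * (α 1 * (1 - α 1))) * ∏ k ∈ Ico 2 t, α k +
    ∑ i ∈ Ico 2 t, √(α 0 * (α i * (1 - α i))) * ∏ k ∈ Ico (i + 1) t, α k

lemma mixingError_two (α : ℕ → ℝ) :
    mixingError α 2 = √(α 0 * (1 - α 0) * (α 1 * (1 - α 1))) := by
  simp [mixingError]

lemma mixingError_succ (α : ℕ → ℝ) {t : ℕ} (ht : 2 ≤ t) :
    mixingError α (t + 1) = mixingError α t * α t + √(α 0 * (α t * (1 - α t))) := by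
  have hprod : ∀ i ∈ Ico 2 t, √(α 0 * (α i * (1 - α i))) * ∏ k ∈ Ico (i + 1) (t + 1), α k =
      √(α 0 * (α i * (1 - α i))) * (∏ k ∈ Ico (i + 1) t, α k) * α t := fun i hi => by
    rw [prod_Ico_succ_top (mem_Ico.1 hi).2, mul_assoc]
  rw [mixingError, mixingError, prod_Ico_succ_top ht, sum_Ico_succ_top ht, sum_congr rfl hprod,
    Ico_self, prod_empty, ← sum_mul]
  ring

lemma mul_one_sub_le_quarter (x : ℝ) : x * (1 - x) ≤ 1 / 4 := by
  nlinarith [sq_nonneg (x - 1 / 2)]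

lemma mixingError_le {α : ℕ → ℝ} (hα₀ : ∀ i, 0 ≤ α i) (hα₁ : ∀ i, α i ≤ 1) {t : ℕ} (ht : 2 ≤ t) :
    mixingError α t ≤ (2 * (t : ℝ) - 3) / 4 := by
  have hvar (i : ℕ) : 0 ≤ α i * (1 - α i) := mul_nonneg (hα₀ i) (sub_nonneg.2 (hα₁ i))
  induction t, ht using Nat.le_induction with
  | base =>
    have hfirst : α 0 * (1 - α 0) * (α 1 * (1 - α 1)) ≤ 1 / 4 * (1 / 4) := by
      gcongr
      exacts [hvar 1, mul_one_sub_le_quarter _, mul_one_sub_le_quarter _]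
    rw [mixingError_two, Real.sqrt_le_left (by norm_num)]
    norm_num at hfirst ⊢
    exact hfirst
  | succ t ht ih =>
    have hterm : √(α 0 * (α t * (1 - α t))) ≤ 1 / 2 := by
      rw [Real.sqrt_le_left (by norm_num)]
      linarith [mul_le_of_le_one_left (hvar t) (hα₁ 0), mul_one_sub_le_quarter (α t)]
    have ht' : (2 : ℝ) ≤ t := by exact_mod_cast ht
    have hprev : mixingError α t * α t ≤ (2 * (t : ℝ) - 3) / 4 :=
      (mul_le_mul_of_nonneg_right ih (hα₀ t)).trans
        (mul_le_of_le_one_right (by linarith) (hα₁ t))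
    rw [mixingError_succ α ht]
    push_cast
    linarith

end MixingError

section WalkMass

variable {V : Type*} [Fintype V] [DecidableEq V] {P : Matrix V V ℝ} {w : ℕ → V → ℝ}

lemma expect_sq_walkMass_le (hP : P ∈ doublyStochastic ℝ V) (hw₀ : ∀ i, 0 ≤ w i)
    (hw₁ : ∀ i, w i ≤ 1) (k : ℕ) : 𝔼 x, walkMass P w k x ^ 2 ≤ 𝔼 x, w 0 x := by
  induction k with
  | zero => exact expect_sq_le_expect (hw₀ 0) (hw₁ 0)
  | succ k ih =>
    calc
      𝔼 x, walkMass P w (k + 1) x ^ 2 ≤ 𝔼 x, (walkMass P w k ᵥ* P) x ^ 2 :=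
        expect_le_expect fun x _ => by
          rw [walkMass, Pi.mul_apply, mul_pow]
          exact mul_le_of_le_one_right (sq_nonneg _) (pow_le_one₀ (hw₀ _ x) (hw₁ _ x))
      _ ≤ 𝔼 x, walkMass P w k x ^ 2 := expect_sq_vecMul_le hP _
      _ ≤ 𝔼 x, w 0 x := ih

variable [Nonempty V] {μ : ℝ}

lemma abs_expect_walkMass_succ_sub_le (hP : P ∈ doublyStochastic ℝ V) (hμ₀ : 0 ≤ μ)
    (hμ : MeanZeroBound P μ) (k : ℕ) (hw₀ : 0 ≤ w (k + 1)) (hw₁ : w (k + 1) ≤ 1) {c : ℝ}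
    (hc : uniformVariance (walkMass P w k) ≤ c) :
    |𝔼 x, walkMass P w (k + 1) x - (𝔼 x, walkMass P w k x) * 𝔼 x, w (k + 1) x| ≤
      μ * √(c * ((𝔼 x, w (k + 1) x) * (1 - 𝔼 x, w (k + 1) x))) := by
  have hmass : 𝔼 x, walkMass P w (k + 1) x = 𝔼 x, walkMass P w k x * (P *ᵥ w (k + 1)) x := by
    simp only [Fintype.expect_eq_sum_div_card]
    congr 1
    exact (dotProduct_mulVec (walkMass P w k) P (w (k + 1))).symm
  rw [hmass]
  refine (abs_expect_mul_mulVec_sub_le (mulVec_one_of_mem_doublyStochastic hP)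
    (one_vecMul_of_mem_doublyStochastic hP) hμ₀ hμ _ _).trans ?_
  gcongr
  exacts [uniformVariance_nonneg _, (uniformVariance_nonneg _).trans hc,
    uniformVariance_le_expect_mul_one_sub hw₀ hw₁]

theorem abs_expect_walkMass_sub_prod_le (hP : P ∈ doublyStochastic ℝ V) (hμ₀ : 0 ≤ μ)
    (hμ : MeanZeroBound P μ) (hw₀ : ∀ i, 0 ≤ w i) (hw₁ : ∀ i, w i ≤ 1) (k : ℕ) :
    |𝔼 x, walkMass P w (k + 1) x - ∏ i ∈ range (k + 2), 𝔼 x, w i x| ≤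
      μ * mixingError (fun i => 𝔼 x, w i x) (k + 2) := by
  induction k with
  | zero =>
    rw [zero_add, mixingError_two, prod_range_succ, prod_range_one]
    exact abs_expect_walkMass_succ_sub_le hP hμ₀ hμ 0 (hw₀ 1) (hw₁ 1)
      (uniformVariance_le_expect_mul_one_sub (hw₀ 0) (hw₁ 0))
  | succ k ih =>
    set α : ℕ → ℝ := fun i => 𝔼 x, w i x
    have hvar : uniformVariance (walkMass P w (k + 1)) ≤ α 0 :=
      (uniformVariance_le_expect_sq _).trans (expect_sq_walkMass_le hP hw₀ hw₁ (k + 1))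
    have hα₀ : 0 ≤ α (k + 2) := expect_nonneg fun x _ => hw₀ (k + 2) x
    calc
      |𝔼 x, walkMass P w (k + 2) x - ∏ i ∈ range (k + 3), α i|
        ≤ |𝔼 x, walkMass P w (k + 2) x - (𝔼 x, walkMass P w (k + 1) x) * α (k + 2)| +
            |(𝔼 x, walkMass P w (k + 1) x) * α (k + 2) -
              (∏ i ∈ range (k + 2), α i) * α (k + 2)| := by
        rw [prod_range_succ _ (k + 2)]
        exact abs_sub_le _ _ _
      _ ≤ μ * √(α 0 * (α (k + 2) * (1 - α (k + 2)))) + μ * mixingError α (k + 2) * α (k + 2) := by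
        rw [← sub_mul, abs_mul, abs_of_nonneg hα₀]
        gcongr
        exact abs_expect_walkMass_succ_sub_le hP hμ₀ hμ (k + 1) (hw₀ _) (hw₁ _) hvar
      _ = μ * mixingError α (k + 3) := by
        rw [mixingError_succ α (Nat.le_add_left 2 k)]
        ring

end WalkMass

end WalkMixing

open Finset WalkMixing BigOperators in
theorem walk_hypergraph_mixing_general {V : Type*} [Fintype V] [Nonempty V] {A : Matrix V V ℝ}
    {d lam : ℝ} (hd : 0 < d) (hA : ∀ x y, 0 ≤ A x y) (hrow : ∀ x, ∑ y, A x y = d)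
    (hcol : ∀ y, ∑ x, A x y = d) (hlam₀ : 0 ≤ lam) (hlam : MeanZeroBound A lam)
    {w : ℕ → V → ℝ} (hw₀ : ∀ i, 0 ≤ w i) (hw₁ : ∀ i, w i ≤ 1)
    {α : ℕ → ℝ} (hα : ∀ i, α i = 𝔼 x, w i x) (k : ℕ) :
    |(∑ v : Fin (k + 2) → V, walkWeight A w v) / (Fintype.card V * d ^ (k + 1)) -
        ∏ i ∈ range (k + 2), α i| ≤ lam / d * mixingError α (k + 2) ∧
      lam / d * mixingError α (k + 2) ≤ (2 * ((k + 2 : ℕ) : ℝ) - 3) * lam / (4 * d) := by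
  obtain rfl : α = fun i => 𝔼 x, w i x := funext hα
  obtain ⟨P, hP, rfl⟩ := (exists_mem_doublyStochastic_eq_smul_iff hd.le).2 ⟨hA, hrow, hcol⟩
  have hmass : (∑ v : Fin (k + 2) → V, walkWeight (d • P) w v) / (Fintype.card V * d ^ (k + 1)) =
      𝔼 x, walkMass P w (k + 1) x := by
    simp only [walkWeight_smul, ← mul_sum, sum_walkWeight, Fintype.expect_eq_sum_div_card]
    rw [mul_comm, mul_div_mul_right _ _ (pow_pos hd _).ne']
  constructor
  · rw [hmass]
    exact abs_expect_walkMass_sub_prod_le hP (div_nonneg hlam₀ hd.le) (hlam.of_smul hd) hw₀ hw₁ k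
  · calc
      _ ≤ lam / d * ((2 * ((k + 2 : ℕ) : ℝ) - 3) / 4) := by
        gcongr
        exact mixingError_le (fun i => expect_nonneg fun x _ => hw₀ i x)
          (fun i => expect_le univ_nonempty fun x _ => hw₁ i x) (Nat.le_add_left 2 k)
      _ = _ := by field_simp

/-- Expander mixing for the walk hypergraph of a `d`-regular graph:
`|e(W₁,…,W_t)/(n·d^{t−1}) − ∏ αᵢ|` is bounded by the explicit
`(λ/d)`-expression, which in turn is at most `(2t−3)·λ/(4d)`. -/
theorem walk_hypergraph_mixing (t n d : ℕ) (ht : 2 ≤ t)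
    (G : SimpleGraph (Fin n)) [DecidableRel G.Adj]
    (hconn : G.Connected) (hreg : G.IsRegularOfDegree d)
    (lam : ℝ) (hlam0 : 0 < lam) (hlamd : lam < d)
    (hlam : ∀ u : Fin n → ℝ, ∑ i, u i = 0 →
      ∑ j, ((G.adjMatrix ℝ).mulVec u j) ^ 2 ≤ lam ^ 2 * ∑ i, (u i) ^ 2)
    (W : ℕ → Finset (Fin n)) (hW : ∀ i, i < t → (W i).Nonempty)
    (α : ℕ → ℝ) (hα : ∀ i, α i = ((W i).card : ℝ) / n) :
    |(((Finset.univ.filter (fun v : Fin t → Fin n =>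
            walkEdge G v ∧ ∀ i : Fin t, v i ∈ W (i : ℕ))).card : ℝ)) /
          ((n : ℝ) * (d : ℝ) ^ (t - 1)) - ∏ i ∈ Finset.range t, α i| ≤
        (lam / d) *
          (Real.sqrt (α 0 * (1 - α 0) * (α 1 * (1 - α 1))) * ∏ k ∈ Finset.Ico 2 t, α k +
            ∑ i ∈ Finset.Ico 2 t,
              Real.sqrt (α 0 * (α i * (1 - α i))) * ∏ k ∈ Finset.Ico (i + 1) t, α k) ∧
      (lam / d) *
          (Real.sqrt (α 0 * (1 - α 0) * (α 1 * (1 - α 1))) * ∏ k ∈ Finset.Ico 2 t, α k +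
            ∑ i ∈ Finset.Ico 2 t,
              Real.sqrt (α 0 * (α i * (1 - α i))) * ∏ k ∈ Finset.Ico (i + 1) t, α k) ≤
        (2 * (t : ℝ) - 3) * lam / (4 * d) := by
  have := hconn.nonempty
  obtain ⟨k, rfl⟩ := Nat.exists_eq_add_of_le' ht
  have hnonneg (x y : Fin n) : 0 ≤ G.adjMatrix ℝ x y := by
    rw [SimpleGraph.adjMatrix_apply]
    split_ifs <;> norm_num
  have hrow := WalkMixing.sum_adjMatrix_row ℝ hreg
  have hcol (y : Fin n) : ∑ x, G.adjMatrix ℝ x y = d := by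
    simpa only [SimpleGraph.adjMatrix_apply, G.adj_comm] using hrow y
  have h := walk_hypergraph_mixing_general (w := fun i => (W i : Set (Fin n)).indicator 1) (α := α)
    (hlam0.trans hlamd) hnonneg hrow hcol hlam0.le hlam
    (fun _ => Set.indicator_nonneg fun _ _ => zero_le_one)
    (fun _ => Set.indicator_le_self' fun _ _ => zero_le_one)
    (fun i => by rw [hα, Finset.expect_indicator_one, Finset.nnratCast_dens, Fintype.card_fin]) k
  rwa [WalkMixing.sum_walkWeight_adjMatrix_indicator, Fintype.card_fin] at h
end
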